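/- Proposition 3: Let n ≥ 3 and let ψ be a pure n-qubit state satisfying the preferred-basis condition (all single-qubit transverse Bloch components b^{(q)}_1(ρ_ψ), b^{(q)}_2(ρ_ψ) vanish). Suppose ψ is a product over some partition of the n qubits into k nonempty blocks P₁, …, P_k of sizes r₁, …, r_k (so r₁ + … + r_k = n). Then M(ρ_ψ) ≤ Σ_{m=1}^{k} C(r_m, 2) + d, where d is the number of indices m with r_m = 2. -/

import Mathlib

noncomputable def pauli : ℕ → Matrix (Fin 2) (Fin 2) ℂ
  | 1 => !![0, 1; 1, 0]
  | 2 => !![0, -Complex.I; Complex.I, 0]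
  | 3 => !![1, 0; 0, -1]
  | _ => 1

/-- The `ι`-fold Kronecker product of single-qubit operators `pauli (f k)`. -/
noncomputable def kronOp {ι : Type*} [Fintype ι] [DecidableEq ι] (f : ι → ℕ) :
    Matrix (ι → Fin 2) (ι → Fin 2) ℂ :=
  Matrix.of fun x y => ∏ k, pauli (f k) (x k) (y k)

/-- Two-body correlation `T^{kl}_{ij}(ρ)`. -/
noncomputable def corr {ι : Type*} [Fintype ι] [DecidableEq ι]
    (ρ : Matrix (ι → Fin 2) (ι → Fin 2) ℂ) (k l : ι) (i j : ℕ) : ℝ :=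
  ((ρ * kronOp (fun q => if q = k then i else if q = l then j else 0)).trace).re

/-- Single-qubit Bloch vector component `b^{(q)}_i(ρ)`. -/
noncomputable def bloch {ι : Type*} [Fintype ι] [DecidableEq ι]
    (ρ : Matrix (ι → Fin 2) (ι → Fin 2) ℂ) (q : ι) (i : ℕ) : ℝ :=
  ((ρ * kronOp (fun p => if p = q then i else 0)).trace).re

/-- `M_{kl}(ρ)`. -/
noncomputable def Mkl {ι : Type*} [Fintype ι] [DecidableEq ι]
    (ρ : Matrix (ι → Fin 2) (ι → Fin 2) ℂ) (k l : ι) : ℝ :=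
  ∑ i ∈ Finset.Icc 1 2, ∑ j ∈ Finset.Icc 1 2, (corr ρ k l i j) ^ 2

/-- `M(ρ) = Σ_{k<l} M_{kl}(ρ)`. -/
noncomputable def Mtot {ι : Type*} [Fintype ι] [LinearOrder ι]
    (ρ : Matrix (ι → Fin 2) (ι → Fin 2) ℂ) : ℝ :=
  ∑ p ∈ Finset.univ.filter (fun p : ι × ι => p.1 < p.2), Mkl ρ p.1 p.2

/-- Density matrix of a pure state `ψ`: `ρ_ψ = ψ ψ†`. -/
noncomputable def pureDensity {ι : Type*} [Fintype ι] [DecidableEq ι]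
    (ψ : (ι → Fin 2) → ℂ) : Matrix (ι → Fin 2) (ι → Fin 2) ℂ :=
  Matrix.of fun x y => ψ x * (starRingEnd ℂ) (ψ y)

/-- `ψ` is a unit vector. -/
def UnitVec {ι : Type*} [Fintype ι] [DecidableEq ι] (ψ : (ι → Fin 2) → ℂ) : Prop :=
  ∑ x, Complex.normSq (ψ x) = 1

/-- Preferred-basis condition: all transverse Bloch components vanish. -/
def PreferredBasis {ι : Type*} [Fintype ι] [DecidableEq ι]
    (ρ : Matrix (ι → Fin 2) (ι → Fin 2) ℂ) : Prop :=
  ∀ q : ι, bloch ρ q 1 = 0 ∧ bloch ρ q 2 = 0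

/-- `P` is a partition of `Fin n` into `k` nonempty blocks. -/
def IsPartition {n k : ℕ} (P : Fin k → Finset (Fin n)) : Prop :=
  (∀ m, (P m).Nonempty) ∧ (∀ m m', m ≠ m' → Disjoint (P m) (P m')) ∧
    ∀ q : Fin n, ∃ m, q ∈ P m

/-- Restriction of an `n`-bit string to a block of qubits. -/
def restrictB {n : ℕ} (S : Finset (Fin n)) (f : Fin n → Fin 2) : (↥S → Fin 2) :=
  fun q => f q.val

/-- `ψ` is the tensor product, under the canonical qubit-reordering isomorphism,
of pure states on the blocks of `P`. -/
def IsProductOver {n k : ℕ} (ψ : (Fin n → Fin 2) → ℂ) (P : Fin k → Finset (Fin n)) : Prop :=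
  ∃ φ : (m : Fin k) → ((↥(P m) → Fin 2) → ℂ),
    (∀ m, UnitVec (φ m)) ∧ ∀ f : Fin n → Fin 2, ψ f = ∏ m, φ m (restrictB (P m) f)

open scoped ComplexOrder

open Finset Matrix

/-! Fix a qubit `k` and two further qubits `l ≠ p`. The four observables `σ₁ ⊗ σ_j` on `k, l` and
`σ₂ ⊗ σ_j` on `k, p`, with `j = 1, 2`, are pairwise anticommuting reflections, so every real unit
combination of them is again a reflection and the squares of their expectations sum to at most `1`.
Adding the same bound with `l` and `p` exchanged gives `M_{kl} + M_{kp} ≤ 2`. Hence `M_{kl} ≤ 1` on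
average over any two or more partners `l` of `k`, whereas a single partner only satisfies
`M_{kl} ≤ 2`; this is why blocks of size two contribute the extra term `d`. In a product state
correlations between different blocks are products of Bloch components, which the
preferred-basis condition annihilates. -/

section Anticommute

/-- Two ring elements anticommute: `a * b = -(b * a)`. Pauli strings either commute or
anticommute, and the monogamy bound comes from the latter case. -/
def Anticommute {R : Type*} [Mul R] [Neg R] (a b : R) : Prop :=
  a * b = -(b * a)

theorem Anticommute.smul_smul {S R : Type*} [CommMonoid S] [NonUnitalNonAssocRing R]
    [DistribMulAction S R] [IsScalarTower S R R] [SMulCommClass S R R] {a b : R}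
    (h : Anticommute a b) (c d : S) : Anticommute (c • a) (d • b) := by
  rw [Anticommute, smul_mul_smul_comm, smul_mul_smul_comm, h, smul_neg, mul_comm c d]

theorem sum_mul_self_of_pairwise_anticommute {α R : Type*} [NonUnitalNonAssocRing R]
    {s : Finset α} {a : α → R} (h : (s : Set α).Pairwise fun i j => Anticommute (a i) (a j)) :
    (∑ i ∈ s, a i) * ∑ i ∈ s, a i = ∑ i ∈ s, a i * a i := by
  classical
  induction s using Finset.induction_on with
  | empty => simp
  | insert i s hi ih =>
    rw [coe_insert, Set.pairwise_insert_of_notMem (mod_cast hi)] at h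
    have hcross : a i * ∑ j ∈ s, a j = -((∑ j ∈ s, a j) * a i) := by
      rw [mul_sum, sum_mul, ← sum_neg_distrib]
      exact sum_congr rfl fun j hj => (h.2 j hj).1
    rw [sum_insert hi, sum_insert hi, add_mul, mul_add, mul_add, ih h.1, hcross]
    abel

theorem sum_sq_re_trace_mul_le_one {𝕜 d α : Type*} [RCLike 𝕜] [Fintype d] [DecidableEq d]
    {ρ : Matrix d d 𝕜} (hρ : ρ.PosSemidef) (htr : ρ.trace = 1) {s : Finset α}
    {A : α → Matrix d d 𝕜} (hA : ∀ a ∈ s, (A a).IsHermitian) (hAA : ∀ a ∈ s, A a * A a = 1)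
    (hanti : (s : Set α).Pairwise fun a b => Anticommute (A a) (A b)) :
    ∑ a ∈ s, (RCLike.re (ρ * A a).trace) ^ 2 ≤ 1 := by
  -- With `B = ∑ a, tr (ρ A_a) A_a`, expand `0 ≤ tr (ρ (1 - B)²)`;
  -- anticommutation makes `B²` scalar.
  set c : α → ℝ := fun a => RCLike.re (ρ * A a).trace
  set B := ∑ a ∈ s, c a • A a
  have hB : Bᴴ = B := by
    rw [conjTranspose_sum]
    exact sum_congr rfl fun a ha => by rw [conjTranspose_smul, (hA a ha).eq, star_trivial]
  have hBB : B * B = (∑ a ∈ s, c a ^ 2) • (1 : Matrix d d 𝕜) := by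
    rw [sum_mul_self_of_pairwise_anticommute fun a ha b hb hab =>
      (hanti ha hb hab).smul_smul (c a) (c b), sum_smul]
    exact sum_congr rfl fun a ha => by rw [smul_mul_smul_comm, hAA a ha, sq]
  have htrB : RCLike.re (ρ * B).trace = ∑ a ∈ s, c a ^ 2 := by
    simp [B, c, RCLike.smul_re, Matrix.mul_sum, trace_sum, sq]
  have hsq : RCLike.re ((1 - B) * ρ * (1 - B)ᴴ).trace = 1 - ∑ a ∈ s, c a ^ 2 := by
    have hexpand : (1 - B) * (1 - B) = 1 - (2 : ℝ) • B + B * B := by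
      rw [two_smul]; noncomm_ring
    rw [conjTranspose_sub, conjTranspose_one, hB, trace_mul_comm, ← Matrix.mul_assoc, hexpand,
      hBB, trace_mul_comm, Matrix.mul_add, Matrix.mul_sub]
    simp only [Matrix.mul_one, Matrix.mul_smul, trace_add, trace_sub, trace_smul, htr,
      map_add, map_sub, RCLike.smul_re, htrB, RCLike.one_re]
    ring
  have hnonneg := (RCLike.nonneg_iff.mp (hρ.mul_mul_conjTranspose_same (1 - B)).trace_nonneg).1
  rw [hsq] at hnonneg
  linarith

end Anticommute

section Sums

theorem sum_le_card_mul_of_pairwise_add_le {α K : Type*} [Field K] [LinearOrder K]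
    [IsStrictOrderedRing K] {s : Finset α} (hs : 1 < #s) {a : α → K} {c : K}
    (h : (s : Set α).Pairwise fun i j => a i + a j ≤ 2 * c) :
    ∑ i ∈ s, a i ≤ #s * c := by
  classical
  have hcard : ∀ i ∈ s, (#(s.erase i) : K) = #s - 1 := fun i hi => by
    rw [card_erase_of_mem hi, Nat.cast_pred (by omega)]
  have hpos : (0 : K) < #s - 1 := sub_pos.mpr (mod_cast hs)
  have hrow : ∀ i ∈ s, (#s - 1) * a i + (∑ j ∈ s, a j - a i) ≤ (#s - 1) * (2 * c) := by
    intro i hi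
    calc (#s - 1) * a i + (∑ j ∈ s, a j - a i)
        = ∑ j ∈ s.erase i, (a i + a j) := by
          rw [sum_add_distrib, sum_const, nsmul_eq_mul, hcard i hi, sum_erase_eq_sub hi]
      _ ≤ ∑ j ∈ s.erase i, 2 * c :=
          sum_le_sum fun j hj => h hi (mem_of_mem_erase hj) (ne_of_mem_erase hj).symm
      _ = (#s - 1) * (2 * c) := by rw [sum_const, nsmul_eq_mul, hcard i hi]
  have htotal := sum_le_sum hrow
  rw [sum_add_distrib, sum_sub_distrib, ← mul_sum, sum_const, sum_const, nsmul_eq_mul,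
    nsmul_eq_mul] at htotal
  refine le_of_mul_le_mul_left ?_ (mul_pos two_pos hpos)
  linarith

theorem two_nsmul_sum_filter_lt {α M : Type*} [Fintype α] [LinearOrder α] [AddCommMonoid M]
    {f : α → α → M} (hf : ∀ a b, a ≠ b → f a b = f b a) :
    2 • ∑ p : α × α with p.1 < p.2, f p.1 p.2 = ∑ a, ∑ b ∈ univ.erase a, f a b := by
  have hlt : ∑ p : α × α with p.1 < p.2, f p.1 p.2 = ∑ a, ∑ b with a < b, f a b := by
    simp only [sum_filter, Fintype.sum_prod_type]
  have hgt : ∑ p : α × α with p.1 < p.2, f p.1 p.2 = ∑ a, ∑ b with b < a, f a b := by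
    simp only [sum_filter, Fintype.sum_prod_type_right]
    refine sum_congr rfl fun a _ => sum_congr rfl fun b _ => ?_
    split_ifs with h
    exacts [hf b a h.ne, rfl]
  rw [two_nsmul]
  nth_rewrite 1 [hlt]
  rw [hgt, ← sum_add_distrib]
  refine sum_congr rfl fun a _ => ?_
  rw [← sum_union (disjoint_filter.mpr fun b _ h => h.not_gt), ← filter_or]
  exact sum_congr (by ext b; simp [lt_or_lt_iff_ne, eq_comm]) fun _ _ => rfl

theorem two_mul_choose_two_add_ite (r : ℕ) :
    2 * ((r.choose 2 : ℝ) + if r = 2 then 1 else 0) = r * (r - 1 + if r = 2 then 1 else 0) := by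
  rw [Nat.cast_choose_two]
  split_ifs with h
  · norm_num [h]
  · ring

end Sums

section Partition

variable {ι κ : Type*} [Fintype ι] [Fintype κ] {P : κ → Finset ι}

@[to_additive]
theorem prod_univ_eq_prod_prod_of_existsUnique_mem {M : Type*} [CommMonoid M]
    (hP : ∀ q, ∃! m, q ∈ P m) (u : ι → M) : ∏ q, u q = ∏ m, ∏ q ∈ P m, u q := by
  simp only [← prod_coe_sort (P _) u]
  rw [← Fintype.prod_sigma fun s : Σ m, P m => u s.2]
  exact ((Set.sigmaEquiv (fun m => (P m : Set ι)) hP).prod_comp u).symm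

theorem sum_prod_restrict [DecidableEq ι] {α R : Type*} [Fintype α] [CommSemiring R]
    (hP : ∀ q, ∃! m, q ∈ P m) (f : ∀ m, (P m → α) → R) :
    ∑ x : ι → α, ∏ m, f m ((P m).restrict x) = ∏ m, ∑ y, f m y := by
  classical
  let e : (ι → α) ≃ ∀ m, P m → α :=
    ((Set.sigmaEquiv (fun m => (P m : Set ι)) hP).symm.arrowCongr (Equiv.refl α)).trans
      (Equiv.piCurry fun _ _ => α)
  rw [prod_univ_sum, Fintype.piFinset_univ]
  exact e.sum_comp fun y => ∏ m, f m (y m)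

end Partition

section Pauli

theorem prod_matrix_one_apply {ι α R : Type*} [Fintype ι] [DecidableEq α] [CommMonoidWithZero R]
    (x y : ι → α) :
    ∏ k, (1 : Matrix α α R) (x k) (y k) = (1 : Matrix (ι → α) (ι → α) R) x y := by
  simp only [one_apply, prod_ite_zero, prod_const_one, mem_univ, true_imp_iff, funext_iff]

theorem isHermitian_pauli (i : ℕ) : (pauli i).IsHermitian := by
  rcases i with _ | _ | _ | _ | i <;> ext a b <;> fin_cases a <;> fin_cases b <;> simp [pauli]

theorem pauli_mul_self (i : ℕ) : pauli i * pauli i = 1 := by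
  rcases i with _ | _ | _ | _ | i <;> ext a b <;> fin_cases a <;> fin_cases b <;> simp [pauli]

theorem anticommute_pauli {i j : ℕ} (hi : i ∈ Icc 1 3) (hj : j ∈ Icc 1 3) (hij : i ≠ j) :
    Anticommute (pauli i) (pauli j) := by
  rw [mem_Icc] at hi hj
  obtain ⟨hi₁, hi₃⟩ := hi
  obtain ⟨hj₁, hj₃⟩ := hj
  interval_cases i <;> interval_cases j <;>
    first
    | exact absurd rfl hij
    | (ext a b; fin_cases a <;> fin_cases b <;> simp [pauli])

variable {ι : Type*} [Fintype ι] [DecidableEq ι]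

theorem kronOp_mul_apply (f g : ι → ℕ) (x z : ι → Fin 2) :
    (kronOp f * kronOp g) x z = ∏ k, (pauli (f k) * pauli (g k)) (x k) (z k) := by
  simp only [Matrix.mul_apply, kronOp, of_apply, ← prod_mul_distrib]
  rw [prod_univ_sum, Fintype.piFinset_univ]

theorem isHermitian_kronOp (f : ι → ℕ) : (kronOp f).IsHermitian := by
  ext x y
  simp only [conjTranspose_apply, kronOp, of_apply, star_prod]
  exact prod_congr rfl fun k _ => (isHermitian_pauli (f k)).apply _ _

theorem kronOp_zero : kronOp (fun _ : ι => 0) = 1 := by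
  ext x y
  exact prod_matrix_one_apply x y

theorem kronOp_mul_self (f : ι → ℕ) : kronOp f * kronOp f = 1 := by
  ext x y
  simp only [kronOp_mul_apply, pauli_mul_self, prod_matrix_one_apply]

theorem anticommute_kronOp {f g : ι → ℕ} (a : ι) (ha : Anticommute (pauli (f a)) (pauli (g a)))
    (hne : ∀ q, q ≠ a → Commute (pauli (f q)) (pauli (g q))) :
    Anticommute (kronOp f) (kronOp g) := by
  ext x z
  rw [Matrix.neg_apply, kronOp_mul_apply, kronOp_mul_apply, ← mul_prod_erase _ _ (mem_univ a),
    ← mul_prod_erase _ _ (mem_univ a), ha, Matrix.neg_apply, neg_mul]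
  congr 2
  exact prod_congr rfl fun q hq => by rw [(hne q (ne_of_mem_erase hq)).eq]

theorem im_trace_mul_kronOp {ρ : Matrix (ι → Fin 2) (ι → Fin 2) ℂ} (hρ : ρ.IsHermitian)
    (f : ι → ℕ) : (ρ * kronOp f).trace.im = 0 := by
  refine Complex.conj_eq_iff_im.mp ?_
  rw [starRingEnd_apply, ← trace_conjTranspose, conjTranspose_mul, hρ.eq,
    (isHermitian_kronOp f).eq, trace_mul_comm]

end Pauli

section Monogamy

variable {ι : Type*} [Fintype ι] [DecidableEq ι] {ρ : Matrix (ι → Fin 2) (ι → Fin 2) ℂ}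

/-- The index function of the Pauli string in the two-body correlation `T^{kl}_{ij}`: `σ_i` at `k`,
`σ_j` at `l`, identity elsewhere. At `k = l` the index `i` wins, as in `corr`. -/
def twoBodyIndex (k l : ι) (i j : ℕ) : ι → ℕ :=
  fun q => if q = k then i else if q = l then j else 0

theorem corr_eq (ρ : Matrix (ι → Fin 2) (ι → Fin 2) ℂ) (k l : ι) (i j : ℕ) :
    corr ρ k l i j = (ρ * kronOp (twoBodyIndex k l i j)).trace.re :=
  rfl

theorem anticommute_kronOp_twoBodyIndex_right {k l : ι} (hkl : k ≠ l) (i : ℕ) {j j' : ℕ}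
    (hj : Anticommute (pauli j) (pauli j')) :
    Anticommute (kronOp (twoBodyIndex k l i j)) (kronOp (twoBodyIndex k l i j')) := by
  refine anticommute_kronOp l (by simpa [twoBodyIndex, hkl.symm] using hj) fun q hq => ?_
  simp [twoBodyIndex, hq]

theorem anticommute_kronOp_twoBodyIndex_left (k : ι) {l p : ι} (hlp : l ≠ p) {i i' : ℕ}
    (hi : Anticommute (pauli i) (pauli i')) (j j' : ℕ) :
    Anticommute (kronOp (twoBodyIndex k l i j)) (kronOp (twoBodyIndex k p i' j')) := by
  refine anticommute_kronOp k (by simpa [twoBodyIndex] using hi) fun q hq => ?_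
  have hone : pauli 0 = 1 := rfl
  by_cases hql : q = l
  · simp [twoBodyIndex, hq, hql ▸ hlp, hone]
  · simp [twoBodyIndex, hq, hql, hone]

theorem sum_sum_corr_sq_le_one (hρ : ρ.PosSemidef) (htr : ρ.trace = 1) {I J : Finset ℕ}
    (hI : I ⊆ Icc 1 3) (hJ : J ⊆ Icc 1 3) {k : ι} {q : ℕ → ι} (hk : ∀ i ∈ I, k ≠ q i)
    (hq : Set.InjOn q I) : ∑ i ∈ I, ∑ j ∈ J, corr ρ k (q i) i j ^ 2 ≤ 1 := by
  simp only [corr_eq]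
  rw [← sum_product' (f := fun i j => (ρ * kronOp (twoBodyIndex k (q i) i j)).trace.re ^ 2)]
  refine sum_sq_re_trace_mul_le_one hρ htr (fun _ _ => isHermitian_kronOp _)
    (fun _ _ => kronOp_mul_self _) ?_
  rintro ⟨i, j⟩ hij ⟨i', j'⟩ hij' hne
  obtain ⟨hi, hj⟩ := mem_product.mp hij
  obtain ⟨hi', hj'⟩ := mem_product.mp hij'
  by_cases hii : i = i'
  · subst hii
    have hjj : j ≠ j' := fun h => hne (by rw [h])
    exact anticommute_kronOp_twoBodyIndex_right (hk i hi) i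
      (anticommute_pauli (hJ hj) (hJ hj') hjj)
  · exact anticommute_kronOp_twoBodyIndex_left k (hq.ne hi hi' hii)
      (anticommute_pauli (hI hi) (hI hi') hii) j j'

theorem Mkl_le_two (hρ : ρ.PosSemidef) (htr : ρ.trace = 1) {k l : ι} (hkl : k ≠ l) :
    Mkl ρ k l ≤ 2 := by
  have hrow : ∀ i ∈ Icc 1 2, ∑ j ∈ Icc 1 2, corr ρ k l i j ^ 2 ≤ 1 := fun i hi => by
    simpa using sum_sum_corr_sq_le_one hρ htr (I := {i}) (J := Icc 1 2) (q := fun _ => l)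
      (singleton_subset_iff.mpr (Icc_subset_Icc_right (by norm_num) hi))
      (Icc_subset_Icc_right (by norm_num)) (fun _ _ => hkl) (by simp)
  simpa [Mkl] using sum_le_card_nsmul _ _ _ hrow

theorem Mkl_add_Mkl_le_two (hρ : ρ.PosSemidef) (htr : ρ.trace = 1) {k l p : ι} (hkl : k ≠ l)
    (hkp : k ≠ p) (hlp : l ≠ p) : Mkl ρ k l + Mkl ρ k p ≤ 2 := by
  have hcross : ∀ l p : ι, k ≠ l → k ≠ p → l ≠ p →
      ∑ j ∈ Icc 1 2, corr ρ k l 1 j ^ 2 + ∑ j ∈ Icc 1 2, corr ρ k p 2 j ^ 2 ≤ 1 := by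
    intro l p hkl hkp hlp
    simpa using sum_sum_corr_sq_le_one hρ htr (I := {1, 2}) (J := Icc 1 2)
      (q := fun i => if i = 1 then l else p) (by decide) (by decide) (by simp [hkl, hkp])
      (by simp [Set.injOn_insert, hlp])
  have hMkl : ∀ l, Mkl ρ k l =
      ∑ j ∈ Icc 1 2, corr ρ k l 1 j ^ 2 + ∑ j ∈ Icc 1 2, corr ρ k l 2 j ^ 2 :=
    fun l => sum_pair (by decide : 1 ≠ 2)
  linarith [hMkl l, hMkl p, hcross l p hkl hkp hlp, hcross p l hkp hkl hlp.symm]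

theorem corr_comm (ρ : Matrix (ι → Fin 2) (ι → Fin 2) ℂ) {k l : ι} (hkl : k ≠ l) (i j : ℕ) :
    corr ρ k l i j = corr ρ l k j i := by
  have hindex : twoBodyIndex k l i j = twoBodyIndex l k j i := by
    funext q
    by_cases hq : q = k
    · simp [twoBodyIndex, hq, hkl]
    · simp [twoBodyIndex, hq]
  rw [corr_eq, corr_eq, hindex]

theorem Mkl_comm (ρ : Matrix (ι → Fin 2) (ι → Fin 2) ℂ) {k l : ι} (hkl : k ≠ l) :
    Mkl ρ k l = Mkl ρ l k := by
  simp only [Mkl, corr_comm ρ hkl]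
  exact sum_comm

theorem sum_Mkl_le_card_add (hρ : ρ.PosSemidef) (htr : ρ.trace = 1) {k : ι} {T : Finset ι}
    (hk : k ∉ T) : ∑ l ∈ T, Mkl ρ k l ≤ #T + if #T = 1 then 1 else 0 := by
  have hne : ∀ l ∈ T, k ≠ l := fun l hl h => hk (h ▸ hl)
  obtain hcard | hcard | hcard : #T = 0 ∨ #T = 1 ∨ 1 < #T := by omega
  · simp [card_eq_zero.mp hcard]
  · obtain ⟨l, rfl⟩ := card_eq_one.mp hcard
    simpa [one_add_one_eq_two] using Mkl_le_two hρ htr (hne l (mem_singleton_self l))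
  · rw [if_neg hcard.ne', add_zero, ← mul_one (#T : ℝ)]
    refine sum_le_card_mul_of_pairwise_add_le hcard fun l hl p hp hlp => ?_
    rw [mul_one]
    exact Mkl_add_Mkl_le_two hρ htr (hne l hl) (hne p hp) hlp

end Monogamy

section Product

/-- The operator `ρ` is the tensor product, up to the canonical reordering of the qubits, of
operators on the blocks of `P`: the mixed-state form of `IsProductOver`. The factors are not
required to be states. -/
def IsTensorProductOver {ι κ : Type*} [Fintype κ] (ρ : Matrix (ι → Fin 2) (ι → Fin 2) ℂ)
    (P : κ → Finset ι) : Prop :=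
  ∃ σ : ∀ m, Matrix (P m → Fin 2) (P m → Fin 2) ℂ,
    ∀ x y, ρ x y = ∏ m, σ m ((P m).restrict x) ((P m).restrict y)

variable {ι κ : Type*} [Fintype ι] [Fintype κ] {ρ : Matrix (ι → Fin 2) (ι → Fin 2) ℂ}
  {P : κ → Finset ι}

theorem trace_mul_kronOp_eq_prod [DecidableEq ι] (hP : ∀ q, ∃! m, q ∈ P m)
    {σ : ∀ m, Matrix (P m → Fin 2) (P m → Fin 2) ℂ}
    (hσ : ∀ x y, ρ x y = ∏ m, σ m ((P m).restrict x) ((P m).restrict y)) (f : ι → ℕ) :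
    (ρ * kronOp f).trace = ∏ m, (σ m * kronOp ((P m).restrict f)).trace := by
  have hkron : ∀ x y, kronOp f x y =
      ∏ m, kronOp ((P m).restrict f) ((P m).restrict x) ((P m).restrict y) :=
    fun x y => (prod_univ_eq_prod_prod_of_existsUnique_mem hP _).trans
      (prod_congr rfl fun m _ => (prod_coe_sort (P m) _).symm)
  simp only [trace, diag_apply, Matrix.mul_apply, hσ, hkron, ← prod_mul_distrib]
  rw [← sum_prod_restrict hP]
  refine sum_congr rfl fun x _ => ?_
  exact sum_prod_restrict hP fun m y =>
    σ m ((P m).restrict x) y * kronOp ((P m).restrict f) y ((P m).restrict x)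

theorem IsTensorProductOver.corr_eq_bloch_mul_bloch [DecidableEq ι] (h : IsTensorProductOver ρ P)
    (hP : ∀ q, ∃! m, q ∈ P m) (hρ : ρ.IsHermitian) (htr : ρ.trace = 1) {a b : ι} {m : κ}
    (ha : a ∈ P m) (hb : b ∉ P m) (i j : ℕ) : corr ρ a b i j = bloch ρ a i * bloch ρ b j := by
  obtain ⟨σ, hσ⟩ := h
  -- The factor `tr ρ = 1` lets the two sides be compared block by block.
  have hfactor : (ρ * kronOp (twoBodyIndex a b i j)).trace * (ρ * kronOp fun _ => 0).trace =
      (ρ * kronOp fun q => if q = a then i else 0).trace *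
        (ρ * kronOp fun q => if q = b then j else 0).trace := by
    simp only [trace_mul_kronOp_eq_prod hP hσ, ← prod_mul_distrib]
    refine prod_congr rfl fun m' _ => ?_
    by_cases hm : m' = m
    · subst hm
      have hqb : ∀ q : P m', q.1 ≠ b := fun q h => hb (h ▸ q.2)
      simp only [restrict_def, twoBodyIndex, hqb, if_false]
    · have hqa : ∀ q : P m', q.1 ≠ a := fun q h => hm ((hP a).unique (h ▸ q.2) ha)
      simp only [restrict_def, twoBodyIndex, hqa, if_false]
      rw [mul_comm]
  rw [kronOp_zero, Matrix.mul_one, htr, mul_one] at hfactor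
  rw [corr_eq, hfactor, Complex.mul_re, im_trace_mul_kronOp hρ, zero_mul, sub_zero]
  rfl

theorem IsTensorProductOver.Mkl_eq_zero [DecidableEq ι] (h : IsTensorProductOver ρ P)
    (hP : ∀ q, ∃! m, q ∈ P m) (hρ : ρ.IsHermitian) (htr : ρ.trace = 1) (hpb : PreferredBasis ρ)
    {a b : ι} {m : κ} (ha : a ∈ P m) (hb : b ∉ P m) : Mkl ρ a b = 0 := by
  refine sum_eq_zero fun i hi => sum_eq_zero fun j _ => ?_
  have hbloch : bloch ρ a i = 0 := by
    obtain ⟨hi₁, hi₂⟩ := mem_Icc.mp hi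
    interval_cases i
    exacts [(hpb a).1, (hpb a).2]
  rw [h.corr_eq_bloch_mul_bloch hP hρ htr ha hb, hbloch, zero_mul, zero_pow two_ne_zero]

theorem IsTensorProductOver.sum_erase_Mkl_le [DecidableEq ι] (h : IsTensorProductOver ρ P)
    (hP : ∀ q, ∃! m, q ∈ P m) (hρ : ρ.PosSemidef) (htr : ρ.trace = 1) (hpb : PreferredBasis ρ)
    {a : ι} {m : κ} (ha : a ∈ P m) :
    ∑ b ∈ univ.erase a, Mkl ρ a b ≤ #(P m) - 1 + if #(P m) = 2 then 1 else 0 := by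
  have hblock : ∑ b ∈ (P m).erase a, Mkl ρ a b = ∑ b ∈ univ.erase a, Mkl ρ a b :=
    sum_subset (erase_subset_erase a (subset_univ _)) fun b hb hb' =>
      h.Mkl_eq_zero hP hρ.isHermitian htr hpb ha fun hbm =>
        hb' (mem_erase.mpr ⟨ne_of_mem_erase hb, hbm⟩)
  have hcard : #(P m) - 1 = 1 ↔ #(P m) = 2 := by omega
  simpa only [hblock, card_erase_of_mem ha, Nat.cast_pred (card_pos.mpr ⟨a, ha⟩), hcard] using
    sum_Mkl_le_card_add hρ htr (notMem_erase a (P m))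

end Product

section PureState

variable {ι : Type*} [Fintype ι] [DecidableEq ι]

theorem posSemidef_pureDensity (ψ : (ι → Fin 2) → ℂ) : (pureDensity ψ).PosSemidef :=
  posSemidef_vecMulVec_self_star ψ

theorem UnitVec.trace_pureDensity {ψ : (ι → Fin 2) → ℂ} (hψ : UnitVec ψ) :
    (pureDensity ψ).trace = 1 := by
  simp only [trace, diag_apply, pureDensity, of_apply, Complex.mul_conj]
  exact mod_cast hψ

theorem IsPartition.existsUnique_mem {n k : ℕ} {P : Fin k → Finset (Fin n)} (hP : IsPartition P)
    (q : Fin n) : ∃! m, q ∈ P m := by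
  obtain ⟨m, hm⟩ := hP.2.2 q
  refine ⟨m, hm, fun m' hm' => ?_⟩
  by_contra hne
  exact disjoint_left.mp (hP.2.1 m' m hne) hm' hm

theorem IsProductOver.isTensorProductOver_pureDensity {n k : ℕ} {ψ : (Fin n → Fin 2) → ℂ}
    {P : Fin k → Finset (Fin n)} (h : IsProductOver ψ P) :
    IsTensorProductOver (pureDensity ψ) P := by
  obtain ⟨φ, -, hφ⟩ := h
  refine ⟨fun m => pureDensity (φ m), fun x y => ?_⟩
  simp only [pureDensity, of_apply, hφ, map_prod, prod_mul_distrib]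
  rfl

end PureState

theorem Mtot_le_of_kproduct_general {ι κ : Type*} [Fintype ι] [LinearOrder ι] [Fintype κ]
    {ρ : Matrix (ι → Fin 2) (ι → Fin 2) ℂ} (hρ : ρ.PosSemidef) (htr : ρ.trace = 1)
    (hpb : PreferredBasis ρ) {P : κ → Finset ι} (hP : ∀ q, ∃! m, q ∈ P m)
    (hprod : IsTensorProductOver ρ P) :
    Mtot ρ ≤ (∑ m, ((#(P m)).choose 2 : ℝ)) + (#{m | #(P m) = 2} : ℝ) := by
  have htwo : 2 * Mtot ρ = ∑ a, ∑ b ∈ univ.erase a, Mkl ρ a b := by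
    rw [← two_nsmul_sum_filter_lt fun a b => Mkl_comm ρ, nsmul_eq_mul]
    rfl
  rw [← sum_boole, ← sum_add_distrib]
  refine le_of_mul_le_mul_left ?_ (two_pos (α := ℝ))
  calc 2 * Mtot ρ
      = ∑ m, ∑ a ∈ P m, ∑ b ∈ univ.erase a, Mkl ρ a b := by
        rw [htwo, sum_univ_eq_sum_sum_of_existsUnique_mem hP]
    _ ≤ ∑ m, (#(P m) : ℝ) * (#(P m) - 1 + if #(P m) = 2 then 1 else 0) :=
        sum_le_sum fun m _ => (sum_le_card_nsmul _ _ _ fun a ha =>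
          hprod.sum_erase_Mkl_le hP hρ htr hpb ha).trans_eq (nsmul_eq_mul _ _)
    _ = 2 * ∑ m, (((#(P m)).choose 2 : ℝ) + if #(P m) = 2 then 1 else 0) := by
        simp only [mul_sum, two_mul_choose_two_add_ite]

/-- Proposition 3: for a preferred-basis pure state that is a
product over a partition into blocks of sizes `r₁, …, r_k`,
`M(ρ_ψ) ≤ Σ_m C(r_m,2) + d`, where `d = #{m : r_m = 2}`. -/
theorem Mtot_le_of_kproduct (n : ℕ) (hn : 3 ≤ n) (k : ℕ)
    (P : Fin k → Finset (Fin n)) (hP : IsPartition P)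
    (r : Fin k → ℕ) (hr : ∀ m, (P m).card = r m)
    (ψ : (Fin n → Fin 2) → ℂ) (hψ : UnitVec ψ)
    (hpb : PreferredBasis (pureDensity ψ))
    (hprod : IsProductOver ψ P) :
    Mtot (pureDensity ψ)
      ≤ (∑ m, ((r m).choose 2 : ℝ))
        + ((Finset.univ.filter (fun m => r m = 2)).card : ℝ) := by
  simpa only [← hr] using Mtot_le_of_kproduct_general (posSemidef_pureDensity ψ)
    hψ.trace_pureDensity hpb hP.existsUnique_mem hprod.isTensorProductOver_pureDensity
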